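/- (Gowdy-to-Ernst transformation.) Suppose A' : [R₀,∞) × ℝ → ℝ is a smooth function with ∂_R A' = e^{4U} R⁻¹ ∂_θ A and ∂_θ A' = e^{4U} R⁻¹ ∂_R A on [R₀,∞) × ℝ, and set U'(R,θ) = (1/2) ln R − U(R,θ). Then the pair (U', A') satisfies the same Gowdy wave equations: ∂_R(R ∂_R U') − ∂_θ(R ∂_θ U') = (e^{4U'}/(2R))((∂_R A')² − (∂_θ A')²) and ∂_R(R⁻¹ ∂_R A') − ∂_θ(R⁻¹ ∂_θ A') = (4/R)(−∂_R U' ∂_R A' + ∂_θ U' ∂_θ A'). -/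

import Mathlib

open Real MeasureTheory Set

/-- Partial derivative with respect to the first (time) variable `R`. -/
noncomputable def pdR (f : ℝ → ℝ → ℝ) (R θ : ℝ) : ℝ := deriv (fun r => f r θ) R

/-- Partial derivative with respect to the second (space) variable `θ`. -/
noncomputable def pdT (f : ℝ → ℝ → ℝ) (R θ : ℝ) : ℝ := deriv (fun t => f R t) θ

/-!
Put `V = U' = (1/2) ln R - U`, so that `e^{4U} / R² = e^{-4V}` for `R > 0`. The equations defining
`A'` become `R⁻¹ ∂_R A' = e^{-4V} ∂_θ A` and `R⁻¹ ∂_θ A' = e^{-4V} ∂_R A`. Hence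
`∂_R(R⁻¹ ∂_R A') - ∂_θ(R⁻¹ ∂_θ A')` is the Jacobian `∂_R(e^{-4V}) ∂_θ A - ∂_θ(e^{-4V}) ∂_R A`, the
second derivatives of `A` cancelling, and this is the equation for `A'`. The equation for `V` is the
one for `U` with its sign changed: `ln R` solves the homogeneous equation `∂_R(R ∂_R f) = 0`, and
passing from `A` to `A'` exchanges the two partial derivatives up to a factor.
-/

section PartialDerivatives

variable {f : ℝ → ℝ → ℝ} {R θ : ℝ} {n : WithTop ℕ∞}

lemma hasDerivAt_pdR (hf : DifferentiableAt ℝ (Function.uncurry f) (R, θ)) :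
    HasDerivAt (fun r => f r θ) (pdR f R θ) R :=
  (hf.comp (f := fun r => (r, θ)) R (by fun_prop)).hasDerivAt

lemma hasDerivAt_pdT (hf : DifferentiableAt ℝ (Function.uncurry f) (R, θ)) :
    HasDerivAt (fun t => f R t) (pdT f R θ) θ :=
  (hf.comp (f := fun t => (R, t)) θ (by fun_prop)).hasDerivAt

lemma pdR_eq_fderiv (hf : DifferentiableAt ℝ (Function.uncurry f) (R, θ)) :
    pdR f R θ = fderiv ℝ (Function.uncurry f) (R, θ) (1, 0) :=
  (hf.hasFDerivAt.comp_hasDerivAt (f := fun r => (r, θ)) R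
    ((hasDerivAt_id R).prodMk (hasDerivAt_const R θ))).deriv

lemma pdT_eq_fderiv (hf : DifferentiableAt ℝ (Function.uncurry f) (R, θ)) :
    pdT f R θ = fderiv ℝ (Function.uncurry f) (R, θ) (0, 1) :=
  (hf.hasFDerivAt.comp_hasDerivAt (f := fun t => (R, t)) θ
    ((hasDerivAt_const θ R).prodMk (hasDerivAt_id θ))).deriv

lemma uncurry_pdR (hf : Differentiable ℝ (Function.uncurry f)) :
    Function.uncurry (pdR f) = fun p => fderiv ℝ (Function.uncurry f) p (1, 0) :=
  funext fun p => pdR_eq_fderiv (hf p)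

lemma uncurry_pdT (hf : Differentiable ℝ (Function.uncurry f)) :
    Function.uncurry (pdT f) = fun p => fderiv ℝ (Function.uncurry f) p (0, 1) :=
  funext fun p => pdT_eq_fderiv (hf p)

lemma contDiff_pdR (hf : ContDiff ℝ (n + 1) (Function.uncurry f)) :
    ContDiff ℝ n (Function.uncurry (pdR f)) := by
  rw [uncurry_pdR (hf.differentiable (by simp))]
  exact (hf.fderiv_right le_rfl).clm_apply contDiff_const

lemma contDiff_pdT (hf : ContDiff ℝ (n + 1) (Function.uncurry f)) :
    ContDiff ℝ n (Function.uncurry (pdT f)) := by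
  rw [uncurry_pdT (hf.differentiable (by simp))]
  exact (hf.fderiv_right le_rfl).clm_apply contDiff_const

lemma differentiable_pdR (hf : ContDiff ℝ 2 (Function.uncurry f)) :
    Differentiable ℝ (Function.uncurry (pdR f)) :=
  (contDiff_pdR (n := 1) (by simpa [one_add_one_eq_two] using hf)).differentiable one_ne_zero

lemma differentiable_pdT (hf : ContDiff ℝ 2 (Function.uncurry f)) :
    Differentiable ℝ (Function.uncurry (pdT f)) :=
  (contDiff_pdT (n := 1) (by simpa [one_add_one_eq_two] using hf)).differentiable one_ne_zero

lemma pdR_pdT_comm (hf : ContDiff ℝ 2 (Function.uncurry f)) (R θ : ℝ) :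
    pdR (pdT f) R θ = pdT (pdR f) R θ := by
  have hf₁ : Differentiable ℝ (Function.uncurry f) := hf.differentiable two_ne_zero
  have hf₂ : DifferentiableAt ℝ (fderiv ℝ (Function.uncurry f)) (R, θ) :=
    (hf.fderiv_right (m := 1) (by rw [one_add_one_eq_two])).differentiable one_ne_zero _
  have symm : IsSymmSndFDerivAt ℝ (Function.uncurry f) (R, θ) :=
    hf.contDiffAt.isSymmSndFDerivAt (by simp)
  rw [pdR_eq_fderiv (differentiable_pdT hf _), pdT_eq_fderiv (differentiable_pdR hf _),
    uncurry_pdT hf₁, uncurry_pdR hf₁, fderiv_clm_apply hf₂ (differentiableAt_const _),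
    fderiv_clm_apply hf₂ (differentiableAt_const _)]
  simpa using symm (1, 0) (0, 1)

end PartialDerivatives

lemma deriv_eq_of_eqOn {𝕜 E : Type*} [NontriviallyNormedField 𝕜] [NormedAddCommGroup E]
    [NormedSpace 𝕜 E] {f g : 𝕜 → E} {s : Set 𝕜} {x : 𝕜} (hs : UniqueDiffWithinAt 𝕜 s x)
    (hx : x ∈ s) (hf : DifferentiableAt 𝕜 f x) (hg : DifferentiableAt 𝕜 g x) (h : EqOn f g s) :
    deriv f x = deriv g x := by
  rw [← hf.derivWithin hs, ← hg.derivWithin hs, derivWithin_congr h (h hx)]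

/-- The wave operator `∂_R(w ∂_R f) - ∂_θ(w ∂_θ f)` with a weight `w` depending on `R` only; the
Gowdy equations use the weights `R` and `R⁻¹`. -/
noncomputable def weightedWave (w : ℝ → ℝ) (f : ℝ → ℝ → ℝ) (R θ : ℝ) : ℝ :=
  deriv (fun r => w r * pdR f r θ) R - deriv (fun t => w R * pdT f R t) θ

/-- The first Gowdy wave equation at `(R, θ)`, whose principal part acts on `U`. -/
def GowdyEqU (U A : ℝ → ℝ → ℝ) (R θ : ℝ) : Prop :=
  weightedWave (fun r => r) U R θ
    = exp (4 * U R θ) / (2 * R) * ((pdR A R θ) ^ 2 - (pdT A R θ) ^ 2)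

/-- The second Gowdy wave equation at `(R, θ)`, whose principal part acts on `A`. -/
def GowdyEqA (U A : ℝ → ℝ → ℝ) (R θ : ℝ) : Prop :=
  weightedWave (fun r => r⁻¹) A R θ
    = 4 / R * (-(pdR U R θ * pdR A R θ) + pdT U R θ * pdT A R θ)

/-- `A'` is an Ernst potential of `(U, A)` for times in `I`: its differential is `e^{4U} / R` times
that of `A` with the two partial derivatives exchanged. -/
structure IsErnstPotentialOn (I : Set ℝ) (U A A' : ℝ → ℝ → ℝ) : Prop where
  pdR_eq : ∀ R ∈ I, ∀ θ, pdR A' R θ = exp (4 * U R θ) / R * pdT A R θ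
  pdT_eq : ∀ R ∈ I, ∀ θ, pdT A' R θ = exp (4 * U R θ) / R * pdR A R θ

/-- The function `U' = (1/2) ln R - U` replacing `U` under the Gowdy-to-Ernst transformation. It is
meaningful for `R > 0` only, as `Real.log R` means `ln |R|` for `R < 0` and `0` at `R = 0`. -/
noncomputable def gowdyToErnst (U : ℝ → ℝ → ℝ) (R θ : ℝ) : ℝ := 2⁻¹ * Real.log R - U R θ

lemma weightedWave_eq_jacobian {I : Set ℝ} {w : ℝ → ℝ} {g A F : ℝ → ℝ → ℝ} {R θ : ℝ}
    (hI : UniqueDiffWithinAt ℝ I R) (hR : R ∈ I) (hw : DifferentiableAt ℝ w R)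
    (hg : DifferentiableAt ℝ (Function.uncurry g) (R, θ))
    (hA : ContDiff ℝ 2 (Function.uncurry A)) (hF : ContDiff ℝ 2 (Function.uncurry F))
    (hFR : ∀ r ∈ I, w r * pdR F r θ = g r θ * pdT A r θ)
    (hFT : ∀ t, w R * pdT F R t = g R t * pdR A R t) :
    weightedWave w F R θ = pdR g R θ * pdT A R θ - pdT g R θ * pdR A R θ := by
  have hgA_R : HasDerivAt (fun r => g r θ * pdT A r θ)
      (pdR g R θ * pdT A R θ + g R θ * pdR (pdT A) R θ) R :=
    (hasDerivAt_pdR hg).mul (hasDerivAt_pdR (differentiable_pdT hA _))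
  have hgA_T : HasDerivAt (fun t => g R t * pdR A R t)
      (pdT g R θ * pdR A R θ + g R θ * pdT (pdR A) R θ) θ :=
    (hasDerivAt_pdT hg).mul (hasDerivAt_pdT (differentiable_pdR hA _))
  have hwF : DifferentiableAt ℝ (fun r => w r * pdR F r θ) R :=
    hw.mul (hasDerivAt_pdR (differentiable_pdR hF _)).differentiableAt
  rw [weightedWave, deriv_eq_of_eqOn hI hR hwF hgA_R.differentiableAt hFR, hgA_R.deriv,
    funext hFT, hgA_T.deriv, pdR_pdT_comm hA]
  ring

section GowdyToErnst

variable {U A A' : ℝ → ℝ → ℝ} {R θ : ℝ}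

lemma differentiableAt_gowdyToErnst (hR : 0 < R)
    (hU : DifferentiableAt ℝ (Function.uncurry U) (R, θ)) :
    DifferentiableAt ℝ (Function.uncurry (gowdyToErnst U)) (R, θ) :=
  ((differentiableAt_fst.log hR.ne').const_mul 2⁻¹).sub hU

lemma pdR_gowdyToErnst (hR : 0 < R) (hU : DifferentiableAt ℝ (Function.uncurry U) (R, θ)) :
    pdR (gowdyToErnst U) R θ = 2⁻¹ * R⁻¹ - pdR U R θ :=
  (((Real.hasDerivAt_log hR.ne').const_mul _).sub (hasDerivAt_pdR hU)).deriv

lemma pdT_gowdyToErnst (U : ℝ → ℝ → ℝ) (R θ : ℝ) :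
    pdT (gowdyToErnst U) R θ = -pdT U R θ :=
  deriv_const_sub _

lemma exp_neg_four_mul_gowdyToErnst (hR : 0 < R) :
    exp (-4 * gowdyToErnst U R θ) = exp (4 * U R θ) / R ^ 2 := by
  rw [gowdyToErnst, show -4 * (2⁻¹ * Real.log R - U R θ) = 4 * U R θ - 2 * Real.log R by ring,
    Real.exp_sub, two_mul, Real.exp_add, Real.exp_log hR, sq]

lemma weightedWave_gowdyToErnst (hR : 0 < R) (hU : Differentiable ℝ (Function.uncurry U)) :
    weightedWave (fun r => r) (gowdyToErnst U) R θ = -weightedWave (fun r => r) U R θ := by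
  have hlog_cancel : (fun r => r * pdR (gowdyToErnst U) r θ)
      =ᶠ[nhds R] fun r => 2⁻¹ - r * pdR U r θ := by
    filter_upwards [lt_mem_nhds hR] with r hr
    rw [pdR_gowdyToErnst hr (hU _)]
    field_simp
  simp only [weightedWave, hlog_cancel.deriv_eq, deriv_const_sub, pdT_gowdyToErnst, mul_neg,
    deriv.fun_neg]
  ring

lemma gowdyEqU_gowdyToErnst (hR : 0 < R) (hU : Differentiable ℝ (Function.uncurry U))
    (hA'R : pdR A' R θ = exp (4 * U R θ) / R * pdT A R θ)
    (hA'T : pdT A' R θ = exp (4 * U R θ) / R * pdR A R θ)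
    (eqU : GowdyEqU U A R θ) : GowdyEqU (gowdyToErnst U) A' R θ := by
  have hexp : exp (4 * gowdyToErnst U R θ) = R ^ 2 / exp (4 * U R θ) := by
    rw [← inv_div, ← exp_neg_four_mul_gowdyToErnst hR, ← Real.exp_neg, neg_mul, neg_neg]
  rw [GowdyEqU, weightedWave_gowdyToErnst hR hU, eqU, hexp, hA'R, hA'T]
  field_simp
  ring

lemma gowdyEqA_of_hodge_dual {I : Set ℝ} {V : ℝ → ℝ → ℝ}
    (hI : UniqueDiffWithinAt ℝ I R) (hRI : R ∈ I) (hR : R ≠ 0)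
    (hV : DifferentiableAt ℝ (Function.uncurry V) (R, θ))
    (hA : ContDiff ℝ 2 (Function.uncurry A)) (hA' : ContDiff ℝ 2 (Function.uncurry A'))
    (hA'R : ∀ r ∈ I, r⁻¹ * pdR A' r θ = exp (-4 * V r θ) * pdT A r θ)
    (hA'T : ∀ t, R⁻¹ * pdT A' R t = exp (-4 * V R t) * pdR A R t) :
    GowdyEqA V A' R θ := by
  set g : ℝ → ℝ → ℝ := fun r t => exp (-4 * V r t)
  have hg : DifferentiableAt ℝ (Function.uncurry g) (R, θ) := (hV.const_mul (-4)).exp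
  have hgR : pdR g R θ = g R θ * (-4 * pdR V R θ) :=
    ((hasDerivAt_pdR hV).const_mul (-4)).exp.deriv
  have hgT : pdT g R θ = g R θ * (-4 * pdT V R θ) :=
    ((hasDerivAt_pdT hV).const_mul (-4)).exp.deriv
  calc weightedWave (fun r => r⁻¹) A' R θ
      = pdR g R θ * pdT A R θ - pdT g R θ * pdR A R θ :=
        weightedWave_eq_jacobian hI hRI (differentiableAt_inv hR) hg hA hA' hA'R hA'T
    _ = -4 * pdR V R θ * (g R θ * pdT A R θ) + 4 * pdT V R θ * (g R θ * pdR A R θ) := by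
        rw [hgR, hgT]; ring
    _ = 4 / R * (-(pdR V R θ * pdR A' R θ) + pdT V R θ * pdT A' R θ) := by
        rw [← hA'R R hRI, ← hA'T θ]; ring

end GowdyToErnst

theorem stmt3_general {I : Set ℝ} (hI : UniqueDiffOn ℝ I) (hpos : ∀ R ∈ I, 0 < R)
    {U A A' : ℝ → ℝ → ℝ}
    (hU : ContDiff ℝ 2 (Function.uncurry U)) (hA : ContDiff ℝ 2 (Function.uncurry A))
    (hA' : ContDiff ℝ 2 (Function.uncurry A')) (eqU : ∀ R ∈ I, ∀ θ, GowdyEqU U A R θ)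
    (hErnst : IsErnstPotentialOn I U A A') :
    ∀ R ∈ I, ∀ θ, GowdyEqU (gowdyToErnst U) A' R θ ∧ GowdyEqA (gowdyToErnst U) A' R θ := by
  intro R hR θ
  have hU₁ : Differentiable ℝ (Function.uncurry U) := hU.differentiable two_ne_zero
  refine ⟨gowdyEqU_gowdyToErnst (hpos R hR) hU₁ (hErnst.pdR_eq R hR θ) (hErnst.pdT_eq R hR θ)
      (eqU R hR θ),
    gowdyEqA_of_hodge_dual (hI R hR) hR (hpos R hR).ne'
      (differentiableAt_gowdyToErnst (hpos R hR) (hU₁ _)) hA hA' (fun r hr => ?_) fun t => ?_⟩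
  · rw [exp_neg_four_mul_gowdyToErnst (hpos r hr), hErnst.pdR_eq r hr]
    ring
  · rw [exp_neg_four_mul_gowdyToErnst (hpos R hR), hErnst.pdT_eq R hR]
    ring

theorem stmt3
    (R₀ : ℝ) (hR₀ : 0 < R₀)
    (U A : ℝ → ℝ → ℝ)
    (hU : ContDiff ℝ (⊤ : ℕ∞) (Function.uncurry U))
    (hA : ContDiff ℝ (⊤ : ℕ∞) (Function.uncurry A))
    (hUper : ∀ R θ, U R (θ + 2 * π) = U R θ)
    (hAper : ∀ R θ, A R (θ + 2 * π) = A R θ)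
    (eqU : ∀ R, R₀ ≤ R → ∀ θ : ℝ,
      deriv (fun r => r * pdR U r θ) R - deriv (fun t => R * pdT U R t) θ
        = exp (4 * U R θ) / (2 * R) * ((pdR A R θ) ^ 2 - (pdT A R θ) ^ 2))
    (eqA : ∀ R, R₀ ≤ R → ∀ θ : ℝ,
      deriv (fun r => r⁻¹ * pdR A r θ) R - deriv (fun t => R⁻¹ * pdT A R t) θ
        = 4 / R * (-(pdR U R θ * pdR A R θ) + pdT U R θ * pdT A R θ))
    (A' : ℝ → ℝ → ℝ)
    (hA' : ContDiff ℝ (⊤ : ℕ∞) (Function.uncurry A'))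
    (hA'R : ∀ R, R₀ ≤ R → ∀ θ : ℝ, pdR A' R θ = exp (4 * U R θ) / R * pdT A R θ)
    (hA'T : ∀ R, R₀ ≤ R → ∀ θ : ℝ, pdT A' R θ = exp (4 * U R θ) / R * pdR A R θ)
    (U' : ℝ → ℝ → ℝ)
    (hU' : ∀ R θ, U' R θ = 2⁻¹ * Real.log R - U R θ) :
    ∀ R, R₀ ≤ R → ∀ θ : ℝ,
      (deriv (fun r => r * pdR U' r θ) R - deriv (fun t => R * pdT U' R t) θ
        = exp (4 * U' R θ) / (2 * R) * ((pdR A' R θ) ^ 2 - (pdT A' R θ) ^ 2))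
      ∧ (deriv (fun r => r⁻¹ * pdR A' r θ) R - deriv (fun t => R⁻¹ * pdT A' R t) θ
        = 4 / R * (-(pdR U' R θ * pdR A' R θ) + pdT U' R θ * pdT A' R θ)) := by
  obtain rfl : U' = gowdyToErnst U := funext₂ hU'
  have two_le : (2 : WithTop ℕ∞) ≤ (⊤ : ℕ∞) := WithTop.coe_le_coe.2 le_top
  exact stmt3_general (uniqueDiffOn_Ici R₀) (fun _ => hR₀.trans_le) (hU.of_le two_le)
    (hA.of_le two_le) (hA'.of_le two_le) eqU ⟨hA'R, hA'T⟩
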